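/- Let G be a simple graph on a finite vertex set V. Let A and B be invertible V×V complex matrices such that A i j = 0 and B i j = 0 whenever i ≠ j and i, j are not adjacent in G, and let D be an invertible diagonal V×V complex matrix. Set Σ := A⁻¹ · D · B⁻¹. Then Σ is invertible, and for all vertices i ≠ j such that i and j are not adjacent in G and have no common neighbor in G (i.e., their graph distance exceeds 2), the (i,j) entry of Σ⁻¹ is zero. (This is the matrix content of Lemma 1 in the Gaussian case: the inverse covariance matrix of the voltages is supported on pairs of vertices at distance at most two.) -/

import Mathlib

/-! The inverse of `A⁻¹ * D * B⁻¹` is `B * D⁻¹ * A`, and `D⁻¹` is again diagonal, so its `(i, j)`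
entry is `∑ k, B i k * (D⁻¹) k k * A k j`. A nonzero summand needs `k` equal or adjacent to `i`
and equal or adjacent to `j`, which puts `i` and `j` at distance at most two. -/

open Matrix

/-- Let `G` be a simple graph on a finite vertex set `V`, let `A`, `B`
be invertible `V × V` complex matrices vanishing on off-diagonal entries indexed by
non-adjacent pairs of `G`, and let `D` be an invertible diagonal matrix. Then
`Σ = A⁻¹ * D * B⁻¹` is invertible and `Σ⁻¹ i j = 0` whenever `i ≠ j`, `i` and `j` are
not adjacent in `G`, and `i` and `j` have no common neighbor in `G`. -/
theorem inv_covariance_supported_on_two_hops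
    {V : Type*} [Fintype V] [DecidableEq V]
    (G : SimpleGraph V)
    (A B D : Matrix V V ℂ)
    (hA : IsUnit A) (hB : IsUnit B)
    (hDdiag : D.IsDiag) (hD : IsUnit D)
    (hAsp : ∀ i j : V, i ≠ j → ¬ G.Adj i j → A i j = 0)
    (hBsp : ∀ i j : V, i ≠ j → ¬ G.Adj i j → B i j = 0) :
    IsUnit (A⁻¹ * D * B⁻¹) ∧
      ∀ i j : V, i ≠ j → ¬ G.Adj i j → (∀ k : V, ¬ (G.Adj i k ∧ G.Adj k j)) →
        (A⁻¹ * D * B⁻¹)⁻¹ i j = 0 := by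
  refine ⟨((isUnit_nonsing_inv_iff.2 hA).mul hD).mul (isUnit_nonsing_inv_iff.2 hB), ?_⟩
  intro i j hij hadj hcn
  obtain ⟨d, rfl⟩ : ∃ d, D = diagonal d := ⟨D.diag, hDdiag.diagonal_diag.symm⟩
  rw [Matrix.mul_inv_rev, Matrix.mul_inv_rev,
    nonsing_inv_nonsing_inv _ ((isUnit_iff_isUnit_det _).1 hA),
    nonsing_inv_nonsing_inv _ ((isUnit_iff_isUnit_det _).1 hB),
    inv_diagonal, ← Matrix.mul_assoc, Matrix.mul_apply]
  refine Finset.sum_eq_zero fun k _ => ?_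
  rw [mul_diagonal]
  by_cases hik : i = k
  · subst hik
    rw [hAsp i j hij hadj, mul_zero]
  by_cases hG : G.Adj i k
  · have hkj : k ≠ j := by
      rintro rfl
      exact hadj hG
    rw [hAsp k j hkj fun h => hcn k ⟨hG, h⟩, mul_zero]
  · rw [hBsp i k hik hG, zero_mul, zero_mul]
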